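/- Let m ≥ 1 be an integer and Δ ≥ 0 a real. If (6/7)·Δ − (3/4)·2^{−(m−1)} ≤ 2^{−(m−1)}, then Δ ≤ (49/12)·2^{−m}. Consequently, for every gap-estimate sequence (Δ^m_k, r^m_k) for mean rewards μ_k ∈ [0,1] with gaps Δ_k, any arm k with Δ^{m−1}_k = 2^{−(m−1)} satisfies Δ_k ≤ (49/12)·2^{−m}. -/

import Mathlib

/-- A gap-estimate sequence for mean rewards `μ`. -/
structure GapEstSeq {K : Type*} [Fintype K] [Nonempty K] (μ : K → ℝ) where
  D : ℕ → K → ℝ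
  r : ℕ → K → ℝ
  hD0 : ∀ k, D 0 k = 1
  hr : ∀ (m : ℕ) (k : K), |r (m + 1) k - μ k| ≤ D m k / 8
  hD : ∀ (m : ℕ) (k : K),
    D (m + 1) k = max ((2 : ℝ) ^ (-((m : ℤ) + 1)))
      ((Finset.univ.sup' Finset.univ_nonempty (fun k' => r (m + 1) k' - D m k' / 8))
        - r (m + 1) k)

/-! Induction on `m` gives `Δ^m_k ≤ (8/7) Δ_k + 2^{-m}`, the constant `8/7` being the fixed point
of `c = 1 + c/8`. Feeding this bound back into the recursion, at `k` and at the optimal arm (where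
it reads `Δ^m_{k*} ≤ 2^{-m}`), gives `(6/7) Δ_k - (3/4) 2^{-m} ≤ Δ^m_k` for `m ≥ 1`; for `m = 0`
this follows from `Δ_k ≤ 1`. For an arm whose estimate has reached the floor `2^{-m}` the lower
bound solves to the claim. -/

theorem two_zpow_neg_eq_two_mul (m : ℤ) : (2 : ℝ) ^ (-m) = 2 * 2 ^ (-(m + 1)) := by
  rw [← zpow_one_add₀ two_ne_zero, neg_add_rev, add_neg_cancel_left]

theorem le_of_six_sevenths_mul_sub_le {m : ℤ} {Δ : ℝ}
    (h : (6 / 7) * Δ - (3 / 4) * (2 : ℝ) ^ (-(m - 1)) ≤ (2 : ℝ) ^ (-(m - 1))) :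
    Δ ≤ (49 / 12) * (2 : ℝ) ^ (-m) := by
  rw [two_zpow_neg_eq_two_mul, sub_add_cancel] at h
  linarith

namespace GapEstSeq

variable {K : Type*} [Fintype K] [Nonempty K] {μ : K → ℝ} (S : GapEstSeq μ)

/-- The largest lower confidence bound `r^{m+1}_*` on the mean rewards. The index is shifted by one,
as in the fields of `GapEstSeq`, so that `m` is the index of the gap estimates it uses. -/
noncomputable def maxLowerBound (m : ℕ) : ℝ :=
  Finset.univ.sup' Finset.univ_nonempty fun k ↦ S.r (m + 1) k - S.D m k / 8

theorem D_succ (m : ℕ) (k : K) :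
    S.D (m + 1) k = max (2 ^ (-((m : ℤ) + 1))) (S.maxLowerBound m - S.r (m + 1) k) :=
  S.hD m k

theorem maxLowerBound_le {c : ℝ} (hc : ∀ k, μ k ≤ c) (m : ℕ) : S.maxLowerBound m ≤ c := by
  refine Finset.sup'_le _ _ fun k _ ↦ ?_
  have hr := (abs_le.mp (S.hr m k)).2
  linarith [hc k]

theorem sub_le_maxLowerBound (m : ℕ) (k : K) : μ k - S.D m k / 4 ≤ S.maxLowerBound m := by
  have hr := (abs_le.mp (S.hr m k)).1
  calc μ k - S.D m k / 4 ≤ S.r (m + 1) k - S.D m k / 8 := by linarith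
    _ ≤ S.maxLowerBound m :=
      Finset.le_sup' (fun k ↦ S.r (m + 1) k - S.D m k / 8) (Finset.mem_univ k)

theorem D_succ_le {c : ℝ} (hc : ∀ k, μ k ≤ c) (m : ℕ) (k : K) :
    S.D (m + 1) k ≤ max (2 ^ (-((m : ℤ) + 1))) (c - μ k + S.D m k / 8) := by
  have hr := (abs_le.mp (S.hr m k)).1
  rw [S.D_succ]
  exact max_le_max_left _ (by linarith [S.maxLowerBound_le hc m])

theorem le_D_succ (m : ℕ) (j k : K) :
    μ j - μ k - S.D m j / 4 - S.D m k / 8 ≤ S.D (m + 1) k := by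
  have hr := (abs_le.mp (S.hr m k)).2
  calc μ j - μ k - S.D m j / 4 - S.D m k / 8 ≤ S.maxLowerBound m - S.r (m + 1) k := by
        linarith [S.sub_le_maxLowerBound m j]
    _ ≤ S.D (m + 1) k := S.D_succ m k ▸ le_max_right _ _

theorem D_le {c : ℝ} (hc : ∀ k, μ k ≤ c) (m : ℕ) (k : K) :
    S.D m k ≤ 8 / 7 * (c - μ k) + 2 ^ (-(m : ℤ)) := by
  have hgap : 0 ≤ c - μ k := sub_nonneg.mpr (hc k)
  induction m with
  | zero =>
    rw [S.hD0, Nat.cast_zero, neg_zero, zpow_zero]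
    linarith
  | succ m ih =>
    have hpos : (0 : ℝ) < 2 ^ (-((m : ℤ) + 1)) := by positivity
    rw [two_zpow_neg_eq_two_mul] at ih
    rw [Nat.cast_succ]
    exact (S.D_succ_le hc m k).trans (max_le (by linarith) (by linarith))

theorem D_le_two_zpow {kstar : K} (hkstar : ∀ k, μ k ≤ μ kstar) (m : ℕ) :
    S.D m kstar ≤ 2 ^ (-(m : ℤ)) := by
  simpa only [sub_self, mul_zero, zero_add] using S.D_le hkstar m kstar

theorem six_sevenths_mul_gap_sub_le_D_succ {kstar : K} (hkstar : ∀ k, μ k ≤ μ kstar) (m : ℕ)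
    (k : K) :
    (6 / 7) * (μ kstar - μ k) - (3 / 4) * 2 ^ (-((m : ℤ) + 1)) ≤ S.D (m + 1) k := by
  have hstar := S.D_le_two_zpow hkstar m
  have hk := S.D_le hkstar m k
  rw [two_zpow_neg_eq_two_mul] at hstar hk
  linarith [S.le_D_succ m kstar k]

theorem six_sevenths_mul_gap_sub_le_D {kstar : K} (hkstar : ∀ k, μ k ≤ μ kstar) {k : K}
    (hgap : μ kstar - μ k ≤ 1) (m : ℕ) :
    (6 / 7) * (μ kstar - μ k) - (3 / 4) * 2 ^ (-(m : ℤ)) ≤ S.D m k := by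
  cases m with
  | zero =>
    rw [S.hD0, Nat.cast_zero, neg_zero, zpow_zero]
    linarith
  | succ m => exact_mod_cast S.six_sevenths_mul_gap_sub_le_D_succ hkstar m k

end GapEstSeq

/-- If `(6/7)Δ − (3/4)2^{−(m−1)} ≤ 2^{−(m−1)}` then `Δ ≤ (49/12)2^{−m}`;
consequently the fallback arm (with `Δ^{m−1}_k = 2^{−(m−1)}`) of a gap-estimate
sequence has true gap at most `(49/12)2^{−m}`. -/
theorem stmt_14 :
    (∀ (m : ℕ), 1 ≤ m → ∀ Δ : ℝ, 0 ≤ Δ →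
      (6 / 7) * Δ - (3 / 4) * (2 : ℝ) ^ (-((m : ℤ) - 1)) ≤ (2 : ℝ) ^ (-((m : ℤ) - 1)) →
      Δ ≤ (49 / 12) * (2 : ℝ) ^ (-(m : ℤ))) ∧
    (∀ (K : Type) [Fintype K] [Nonempty K] (μ : K → ℝ),
      (∀ k, μ k ∈ Set.Icc (0 : ℝ) 1) → ∀ kstar : K, (∀ k, μ k ≤ μ kstar) →
      ∀ (S : GapEstSeq μ) (m : ℕ), 1 ≤ m → ∀ k : K,
        S.D (m - 1) k = (2 : ℝ) ^ (-((m : ℤ) - 1)) →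
        μ kstar - μ k ≤ (49 / 12) * (2 : ℝ) ^ (-(m : ℤ))) := by
  refine ⟨fun m _ Δ _ h ↦ le_of_six_sevenths_mul_sub_le h, ?_⟩
  intro K _ _ μ hμ kstar hkstar S m hm k hk
  have hgap : μ kstar - μ k ≤ 1 := by linarith [(hμ kstar).2, (hμ k).1]
  have hlower := S.six_sevenths_mul_gap_sub_le_D hkstar hgap (m - 1)
  rw [hk, Nat.cast_sub hm, Nat.cast_one] at hlower
  exact le_of_six_sevenths_mul_sub_le hlower
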